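/- arXiv:2010.15730 — 5 statements merged into one kernel-verified Lean document; each statement's English description precedes it below -/
import Mathlib

section
/- If β ≥ α − 1, then for all distinct x, x' ∈ X there exists a candidate a ∈ A with s(x,a) ≠ s(x',a); that is, distinct rows of the DAV correspondence have pairwise distinct signatures. -/
/-- The set of candidates receiving the maximum number of cards under `z`. -/
def AM {A : Type*} [Fintype A] (z : A → ℕ) : Set A := {a | ∀ b, z b ≤ z a}

/-!
Let `a` maximise the gain `x' i - x i`, ties being broken in favour of larger `x' i`. Every
strategy that makes `a` win with `x` also makes `a` win with `x'`, so it is enough that some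
strategy makes `a` win with `x'` only. Suppose there is none, and let `b` be a candidate with
`x' b < x b`. Playing all `β` cards on `a` makes `a` win with `x'`, because `x' a ≥ 1` and
`β ≥ α - 1`; hence `a` also wins with `x`. Now move the cards from `a` to `b` one at a time.
Whenever `a` wins with `x`, its lead with `x'` is at least two over `b`, and at least one over every
other candidate (over those of the same gain by the choice among ties and the cards still on `a`),
so after the move `a` still wins with `x'`, hence with `x`. When all `β` cards are on `b` this
forces `x' a ≥ β + 2 > α`, which is absurd.
-/

theorem exists_lt_of_sum_eq_of_ne {ι M : Type*} [Fintype ι] [AddCommMonoid M] [LinearOrder M]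
    [IsOrderedCancelAddMonoid M] {f g : ι → M} (hsum : ∑ i, f i = ∑ i, g i) (hne : f ≠ g) :
    ∃ i, f i < g i := by
  by_contra! hle
  exact (Fintype.sum_strictMono (lt_of_le_of_ne hle hne.symm)).ne hsum.symm

section

variable {A : Type*} {x x' : A → ℕ} {a b : A}

/-- `a` has the largest gain `x' i - x i` among all candidates `i`, and the largest `x' i` among
those of largest gain. Gains are integers, as truncated subtraction would conflate all losses. -/
def IsTopGainer (x x' : A → ℕ) (a : A) : Prop :=
  ∀ i, toLex ((x' i : ℤ) - x i, x' i) ≤ toLex ((x' a : ℤ) - x a, x' a)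

theorem exists_isTopGainer [Finite A] [Nonempty A] (x x' : A → ℕ) : ∃ a, IsTopGainer x x' a :=
  Finite.exists_max fun i => toLex ((x' i : ℤ) - x i, x' i)

theorem IsTopGainer.lt_or_eq (h : IsTopGainer x x' a) (i : A) :
    x' i + x a < x' a + x i ∨ x' i + x a = x' a + x i ∧ x' i ≤ x' a := by
  have := Prod.Lex.toLex_le_toLex.mp (h i)
  omega

theorem IsTopGainer.add_le_add (h : IsTopGainer x x' a) (i : A) : x' i + x a ≤ x' a + x i := by
  have := h.lt_or_eq i
  omega

variable [Fintype A] {β : ℕ}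

/-- The strategies `y` of the column voter, with `β` cards, under which `a` receives the maximum
number of cards when the row voter plays `x`. Their number is the signature entry `s(x, a)`. -/
def winningStrategies (β : ℕ) (x : A → ℕ) (a : A) : Set (A → ℕ) :=
  {y | ∑ b, y b = β ∧ a ∈ AM (x + y)}

theorem finite_winningStrategies (β : ℕ) (x : A → ℕ) (a : A) :
    (winningStrategies β x a).Finite := by
  classical
  exact (Finset.piAntidiag Finset.univ β).finite_toSet.subset fun y hy => by simp [hy.1]

theorem IsTopGainer.winningStrategies_subset (h : IsTopGainer x x' a) :
    winningStrategies β x a ⊆ winningStrategies β x' a := by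
  rintro y ⟨hy, hwin⟩
  refine ⟨hy, fun i => ?_⟩
  have hlead : x i + y i ≤ x a + y a := hwin i
  have hgain := h.add_le_add i
  simp only [Pi.add_apply]
  omega

theorem mem_AM_add_single [DecidableEq A] (h : ∑ i, x i ≤ 2 * x a + β) :
    a ∈ AM (x + Pi.single a β) := by
  intro i
  obtain rfl | hi := eq_or_ne i a
  · rfl
  · have hpair : x i + x a ≤ ∑ j, x j :=
      Finset.add_le_sum (fun _ _ => Nat.zero_le _) (Finset.mem_univ i) (Finset.mem_univ a) hi
    simp only [Pi.add_apply, Pi.single_eq_same, Pi.single_eq_of_ne hi]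
    omega

theorem IsTopGainer.mem_AM_of_move_card [DecidableEq A] (h : IsTopGainer x x' a)
    (ha : x a < x' a) (hb : x' b < x b) {m k : ℕ}
    (hwin : a ∈ AM (x + (Pi.single a (m + 1) + Pi.single b k))) :
    a ∈ AM (x' + (Pi.single a m + Pi.single b (k + 1))) := by
  have hab : a ≠ b := fun heq => lt_asymm ha (heq ▸ hb)
  intro i
  have hlead := hwin i
  have hgain := h.lt_or_eq i
  obtain rfl | hia := eq_or_ne i a
  · rfl
  obtain rfl | hib := eq_or_ne i b
  · simp only [Pi.add_apply, Pi.single_eq_same, Pi.single_eq_of_ne hab, Pi.single_eq_of_ne hab.symm,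
      zero_add, add_zero] at hlead ⊢
    omega
  · simp only [Pi.add_apply, Pi.single_eq_same, Pi.single_eq_of_ne hab, Pi.single_eq_of_ne hia,
      Pi.single_eq_of_ne hib, add_zero] at hlead ⊢
    omega

theorem IsTopGainer.exists_mem_winningStrategies_notMem (h : IsTopGainer x x' a)
    (ha : x a < x' a) (hb : x' b < x b) (hβ : ∑ i, x' i ≤ β + 1) :
    ∃ y ∈ winningStrategies β x' a, y ∉ winningStrategies β x a := by
  classical
  by_contra! hsub
  have hwin : ∀ k m, m + k = β →
      Pi.single a m + Pi.single b k ∈ winningStrategies β x a := by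
    intro k
    induction k with
    | zero =>
      rintro m rfl
      refine hsub _ ⟨by simp, ?_⟩
      rw [Pi.single_zero, add_zero]
      exact mem_AM_add_single (by omega)
    | succ k ih =>
      intro m hm
      exact hsub _ ⟨by simp [Finset.sum_add_distrib, hm],
        h.mem_AM_of_move_card ha hb (ih (m + 1) (by omega)).2⟩
  have hlead : x b + β ≤ x a := by
    have hab : a ≠ b := fun heq => lt_asymm ha (heq ▸ hb)
    simpa [hab] using (hwin β 0 (zero_add β)).2 b
  have hle : x' a ≤ ∑ i, x' i :=
    Finset.single_le_sum (fun _ _ => Nat.zero_le _) (Finset.mem_univ a)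
  omega

theorem IsTopGainer.ncard_winningStrategies_lt (h : IsTopGainer x x' a)
    (ha : x a < x' a) (hb : x' b < x b) (hβ : ∑ i, x' i ≤ β + 1) :
    (winningStrategies β x a).ncard < (winningStrategies β x' a).ncard :=
  Set.ncard_lt_ncard
    ((Set.ssubset_iff_of_subset h.winningStrategies_subset).mpr
      (h.exists_mem_winningStrategies_notMem ha hb hβ))
    (finite_winningStrategies β x' a)

end

/-- If `β ≥ α - 1`, then distinct rows of the DAV correspondence have pairwise
distinct signatures. -/
theorem dav_distinct_signatures
    {A : Type*} [Fintype A] (α β : ℕ) (hα : 1 ≤ α) (hβ : 1 ≤ β)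
    (h : α - 1 ≤ β) :
    ∀ x x' : A → ℕ, (∑ a, x a) = α → (∑ a, x' a) = α → x ≠ x' →
      ∃ a : A,
        {y : A → ℕ | (∑ b, y b) = β ∧ a ∈ AM (x + y)}.ncard ≠
        {y : A → ℕ | (∑ b, y b) = β ∧ a ∈ AM (x' + y)}.ncard := by
  intro x x' hx hx' hne
  obtain ⟨g, hg⟩ : ∃ g, x g < x' g := exists_lt_of_sum_eq_of_ne (hx.trans hx'.symm) hne
  obtain ⟨b, hb⟩ : ∃ b, x' b < x b := exists_lt_of_sum_eq_of_ne (hx'.trans hx.symm) hne.symm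
  have : Nonempty A := ⟨g⟩
  obtain ⟨a, htop⟩ := exists_isTopGainer x x'
  have ha : x a < x' a := by
    have := htop.add_le_add g
    omega
  exact ⟨a, (htop.ncard_winningStrategies_lt ha hb (by omega)).ne⟩
end

section
/- Suppose p = 2. Then every DAV form has pairwise distinct rows if and only if β ≥ α − 1 and α + β is odd. That is, the following are equivalent: (i) β ≥ α − 1 and α + β is odd; (ii) every function g : X × Y → A with g(x,y) ∈ AM(x+y) for all (x,y) ∈ X × Y satisfies: for all distinct x, x' ∈ X there exists y ∈ Y with g(x,y) ≠ g(x',y). -/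
/-!
Ties may be broken at will, so every form is forced to tell the rows `x` and `x'` apart exactly when
some `y` makes the winner sets of `x + y` and `x' + y` disjoint. For two candidates and
`x a ≤ x' a`, this says that the midpoint `(α + β) / 2` lies strictly between `x a + y a` and
`x' a + y a`. When `x' a = x a + 1` these are consecutive integers, so `α + β` must be odd; the row
pair `x a = 0`, `x' a = 1` then needs `y a = (α + β - 1) / 2 ≤ β`. Conversely, if `α + β` is odd and
`α ≤ β + 1`, then `y a = (α + β - 1) / 2 - x a` separates any rows with `x a < x' a`.
-/

section Separation

variable {A : Type*} [Fintype A] {α β : ℕ} {x x' : A → ℕ}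

/-- Distributed approval voting forms, encoded as functions on all pairs of ballots and constrained
only at those with `α` and `β` cards. -/
def IsDAVForm (α β : ℕ) (g : (A → ℕ) → (A → ℕ) → A) : Prop :=
  ∀ x y : A → ℕ, ∑ a, x a = α → ∑ a, y a = β → g x y ∈ AM (x + y)

/-- The property of having pairwise distinct rows, where rows are indexed by the ballots with `α`
cards and compared only at the columns with `β` cards. -/
def HasDistinctRows (α β : ℕ) (g : (A → ℕ) → (A → ℕ) → A) : Prop :=
  ∀ x x' : A → ℕ, ∑ a, x a = α → ∑ a, x' a = α → x ≠ x' →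
    ∃ y : A → ℕ, ∑ a, y a = β ∧ g x y ≠ g x' y

/-- Two rows are separable if some column leaves them without a common winner, so that no
tie-breaking can make them agree there. -/
def Separable (β : ℕ) (x x' : A → ℕ) : Prop :=
  ∃ y : A → ℕ, ∑ a, y a = β ∧ Disjoint (AM (x + y)) (AM (x' + y))

theorem Separable.symm (h : Separable β x x') : Separable β x' x :=
  let ⟨y, hy, hdisj⟩ := h
  ⟨y, hy, hdisj.symm⟩

theorem AM_nonempty [Nonempty A] (z : A → ℕ) : (AM z).Nonempty :=
  Finite.exists_max z

theorem exists_isDAVForm_eq_of_not_separable [Nonempty A] (α : ℕ) (h : ¬Separable β x x') :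
    ∃ g, IsDAVForm α β g ∧ ∀ y, g x y = g x' y := by
  classical
  have common (y : A → ℕ) : ∃ c, ∑ a, y a = β → c ∈ AM (x + y) ∧ c ∈ AM (x' + y) := by
    by_cases hy : ∑ a, y a = β
    · obtain ⟨c, hc⟩ := Set.not_disjoint_iff.mp fun hdisj ↦ h ⟨y, hy, hdisj⟩
      exact ⟨c, fun _ ↦ hc⟩
    · exact ⟨Classical.arbitrary A, fun hy' ↦ absurd hy' hy⟩
  choose tie htie using common
  choose winner hwinner using AM_nonempty (A := A)
  refine ⟨fun u y ↦ if u = x ∨ u = x' then tie y else winner (u + y), ?_, ?_⟩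
  · intro u y _ hy
    dsimp only
    split_ifs with hu
    · rcases hu with rfl | rfl
      exacts [(htie y hy).1, (htie y hy).2]
    · exact hwinner (u + y)
  · intro y
    simp only [true_or, or_true, if_true]

theorem forall_hasDistinctRows_iff_forall_separable :
    (∀ g : (A → ℕ) → (A → ℕ) → A, IsDAVForm α β g → HasDistinctRows α β g) ↔
      ∀ x x' : A → ℕ, ∑ a, x a = α → ∑ a, x' a = α → x ≠ x' → Separable β x x' := by
  constructor
  · intro h x x' hx hx' hne
    obtain ⟨a, -⟩ := Function.ne_iff.mp hne
    have : Nonempty A := ⟨a⟩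
    by_contra hsep
    obtain ⟨g, hg, hrows⟩ := exists_isDAVForm_eq_of_not_separable α hsep
    obtain ⟨y, -, hy⟩ := h g hg x x' hx hx' hne
    exact hy (hrows y)
  · intro h g hg x x' hx hx' hne
    obtain ⟨y, hy, hdisj⟩ := h x x' hx hx' hne
    exact ⟨y, hy, hdisj.ne_of_mem (hg x y hx hy) (hg x' y hx' hy)⟩

end Separation

theorem exists_apply_eq_and_sum_eq {A : Type*} [Fintype A] [Nontrivial A] (a : A) {m n : ℕ}
    (hmn : m ≤ n) : ∃ z : A → ℕ, z a = m ∧ ∑ c, z c = n := by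
  classical
  obtain ⟨b, hba⟩ := exists_ne a
  refine ⟨Pi.single a m + Pi.single b (n - m), ?_, ?_⟩
  · simp [hba.symm]
  · simp [Finset.sum_add_distrib, hmn]

section TwoCandidates

variable {A : Type*} [Fintype A] {a b : A}

theorem eq_or_eq_of_card_eq_two (hA : Fintype.card A = 2) (hab : a ≠ b) (c : A) :
    c = a ∨ c = b := by
  by_contra! h
  exact hA.not_gt (Fintype.two_lt_card_iff.mpr ⟨a, b, c, hab, h.1.symm, h.2.symm⟩)

theorem sum_eq_add_of_card_eq_two {M : Type*} [AddCommMonoid M] (hA : Fintype.card A = 2)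
    (hab : a ≠ b) (z : A → M) : ∑ c, z c = z a + z b :=
  Fintype.sum_eq_add a b hab fun c hc ↦
    ((eq_or_eq_of_card_eq_two hA hab c).elim hc.1 hc.2).elim

theorem mem_AM_iff_sum_le_two_mul {z : A → ℕ} (hA : Fintype.card A = 2) :
    a ∈ AM z ↔ ∑ c, z c ≤ 2 * z a := by
  obtain ⟨b, hba⟩ := Fintype.exists_ne_of_one_lt_card (by omega) a
  rw [sum_eq_add_of_card_eq_two hA hba.symm, two_mul, add_le_add_iff_left]
  refine ⟨fun h ↦ h b, fun h c ↦ ?_⟩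
  rcases eq_or_eq_of_card_eq_two hA hba.symm c with rfl | rfl
  exacts [le_rfl, h]

theorem disjoint_AM_iff_two_mul_lt {z z' : A → ℕ} {n : ℕ} (hA : Fintype.card A = 2)
    (hz : ∑ c, z c = n) (hz' : ∑ c, z' c = n) (hle : z a ≤ z' a) :
    Disjoint (AM z) (AM z') ↔ 2 * z a < n ∧ n < 2 * z' a := by
  obtain ⟨b, hba⟩ := Fintype.exists_ne_of_one_lt_card (by omega) a
  have hzb := sum_eq_add_of_card_eq_two hA hba.symm z
  have hzb' := sum_eq_add_of_card_eq_two hA hba.symm z'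
  simp only [Set.disjoint_left, mem_AM_iff_sum_le_two_mul hA, hz, hz', not_le]
  constructor
  · intro h
    have ha := @h a
    have hb := @h b
    omega
  · intro h c
    rcases eq_or_eq_of_card_eq_two hA hba.symm c with rfl | rfl <;> omega

theorem separable_iff_exists_le {α β : ℕ} {x x' : A → ℕ} (hA : Fintype.card A = 2)
    (hx : ∑ c, x c = α) (hx' : ∑ c, x' c = α) (hle : x a ≤ x' a) :
    Separable β x x' ↔ ∃ m ≤ β, 2 * (x a + m) < α + β ∧ α + β < 2 * (x' a + m) := by
  have : Nontrivial A := Fintype.one_lt_card_iff_nontrivial.mp (by omega)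
  have sum_add {u y : A → ℕ} (hu : ∑ c, u c = α) (hy : ∑ c, y c = β) :
      ∑ c, (u + y) c = α + β := by
    simp only [Pi.add_apply, Finset.sum_add_distrib, hu, hy]
  have disjoint_iff {y : A → ℕ} (hy : ∑ c, y c = β) :=
    disjoint_AM_iff_two_mul_lt hA (sum_add hx hy) (sum_add hx' hy) (Nat.add_le_add_right hle (y a))
  constructor
  · rintro ⟨y, hy, hdisj⟩
    have hyβ : y a ≤ β := hy ▸ Finset.single_le_sum_of_canonicallyOrdered (Finset.mem_univ a)
    exact ⟨y a, hyβ, (disjoint_iff hy).mp hdisj⟩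
  · rintro ⟨m, hm, hlt⟩
    obtain ⟨y, rfl, hy⟩ := exists_apply_eq_and_sum_eq a hm
    exact ⟨y, hy, (disjoint_iff hy).mpr hlt⟩

theorem separable_of_odd {α β : ℕ} {x x' : A → ℕ} (hA : Fintype.card A = 2)
    (hαβ : α ≤ β + 1) (hodd : Odd (α + β)) (hx : ∑ c, x c = α) (hx' : ∑ c, x' c = α)
    (hne : x ≠ x') : Separable β x x' := by
  obtain ⟨a, ha⟩ := Function.ne_iff.mp hne
  wlog hle : x a ≤ x' a generalizing x x'
  · exact (this hx' hx hne.symm ha.symm (le_of_not_ge hle)).symm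
  have hlt : x a < x' a := hle.lt_of_ne ha
  have hx'α : x' a ≤ α := hx' ▸ Finset.single_le_sum_of_canonicallyOrdered (Finset.mem_univ a)
  obtain ⟨k, hk⟩ := hodd
  -- `k - x a` is not truncated: `x a ≤ α - 1` and `2 * α ≤ α + β + 1 = 2 * k + 2`.
  exact (separable_iff_exists_le hA hx hx' hle).mpr ⟨k - x a, by omega, by omega, by omega⟩

theorem le_and_odd_of_forall_separable {α β : ℕ} (hA : Fintype.card A = 2) (hα : 1 ≤ α)
    (h : ∀ x x' : A → ℕ, ∑ c, x c = α → ∑ c, x' c = α → x ≠ x' → Separable β x x') :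
    α ≤ β + 1 ∧ Odd (α + β) := by
  have : Nontrivial A := Fintype.one_lt_card_iff_nontrivial.mp (by omega)
  obtain ⟨a⟩ : Nonempty A := inferInstance
  obtain ⟨x, hxa, hx⟩ := exists_apply_eq_and_sum_eq a (Nat.zero_le α)
  obtain ⟨x', hxa', hx'⟩ := exists_apply_eq_and_sum_eq a hα
  have hne : x ≠ x' := fun hxx' ↦ by simp [hxx', hxa'] at hxa
  obtain ⟨m, hm, hlt, hgt⟩ :=
    (separable_iff_exists_le (a := a) hA hx hx' (by omega)).mp (h x x' hx hx' hne)
  exact ⟨by omega, m, by omega⟩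

end TwoCandidates

/-- For `p = 2`: every DAV form has pairwise distinct rows iff `β ≥ α - 1` and
`α + β` is odd. -/
theorem dav_form_distinct_rows_iff_two_candidates
    {A : Type*} [Fintype A] (α β : ℕ) (hα : 1 ≤ α) (hβ : 1 ≤ β)
    (hp : Fintype.card A = 2) :
    (α - 1 ≤ β ∧ Odd (α + β)) ↔
      ∀ g : (A → ℕ) → (A → ℕ) → A,
        (∀ x y : A → ℕ, (∑ a, x a) = α → (∑ a, y a) = β → g x y ∈ AM (x + y)) →
        ∀ x x' : A → ℕ, (∑ a, x a) = α → (∑ a, x' a) = α → x ≠ x' →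
          ∃ y : A → ℕ, (∑ a, y a) = β ∧ g x y ≠ g x' y := by
  refine Iff.trans ?_ forall_hasDistinctRows_iff_forall_separable.symm
  rw [Nat.sub_le_iff_le_add]
  exact ⟨fun h _ _ ↦ separable_of_odd hp h.1 h.2, le_and_odd_of_forall_separable hp hα⟩
end

section
/- Let g : Fin p → Fin p → A be a p × p voting form such that the set of candidates appearing as entries of g has cardinality at most p − 1. Then g contains m1 or m2 as a submatrix. -/
/-- `g` contains the pattern `m1 = [[a,b],[c,a]]` as a submatrix. -/
def ContainsM1 {p : ℕ} {A : Type*} (g : Fin p → Fin p → A) : Prop :=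
  ∃ i k j l : Fin p, i ≠ k ∧ j ≠ l ∧
    g i j = g k l ∧ g i l ≠ g i j ∧ g k j ≠ g i j

/-- `g` contains the pattern `m2 = [[a,a],[a,a]]` as a submatrix. -/
def ContainsM2 {p : ℕ} {A : Type*} (g : Fin p → Fin p → A) : Prop :=
  ∃ i k j l : Fin p, i ≠ k ∧ j ≠ l ∧
    g i j = g i l ∧ g i j = g k j ∧ g i j = g k l

/-- Candidate `a` occurs at least twice in row `i` of `g`. -/
def TwiceInRow {p : ℕ} {A : Type*} (g : Fin p → Fin p → A) (i : Fin p) (a : A) : Prop :=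
  ∃ j l : Fin p, j ≠ l ∧ g i j = a ∧ g i l = a

/-- Candidate `a` occurs at least twice in column `j` of `g`. -/
def TwiceInCol {p : ℕ} {A : Type*} (g : Fin p → Fin p → A) (j : Fin p) (a : A) : Prop :=
  ∃ i k : Fin p, i ≠ k ∧ g i j = a ∧ g k j = a

/-- `g` contains the pattern `m3 = [a,a,b,b]` in some line (row or column). -/
def ContainsM3 {p : ℕ} {A : Type*} (g : Fin p → Fin p → A) : Prop :=
  (∃ (i : Fin p) (a b : A), a ≠ b ∧ TwiceInRow g i a ∧ TwiceInRow g i b) ∨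
  (∃ (j : Fin p) (a b : A), a ≠ b ∧ TwiceInCol g j a ∧ TwiceInCol g j b)

/-- `g` is a plurality DAV form: rows and columns can be bijectively labeled by
candidates so that every entry equals its row label or its column label. -/
def IsPluralityDAV {p : ℕ} {A : Type*} (g : Fin p → Fin p → A) : Prop :=
  ∃ σ τ : Fin p → A, Function.Bijective σ ∧ Function.Bijective τ ∧
    ∀ i j, g i j = σ i ∨ g i j = τ j

/-!
Fix a candidate `a` and let `N i` be the set of columns in which row `i` shows `a`. Avoiding `m1`
says that the sets `N i` are nested, and avoiding `m2` says that two of them share at most one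
column. Hence all rows but one meet `a` only in one common column: the cells showing `a` lie in the
union of a single row and a single column. If there are fewer candidates than rows and fewer
candidates than columns, some row and some column are left out of all these unions, and the cell
where they cross has no candidate to show.
-/

open Cardinal Function

universe u v w

section Nested

variable {ι α : Type*} {N : ι → Set α}

theorem subsingleton_or_subsingleton_of_nested (nested : ∀ i k, N i ⊆ N k ∨ N k ⊆ N i)
    (inter : Pairwise fun i k => (N i ∩ N k).Subsingleton) {i k : ι} (hik : i ≠ k) :
    (N i).Subsingleton ∨ (N k).Subsingleton := by
  refine (nested i k).imp (fun hsub => ?_) (fun hsub => ?_)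
  · simpa only [Set.inter_eq_left.2 hsub] using inter hik
  · simpa only [Set.inter_eq_right.2 hsub] using inter hik

theorem exists_forall_ne_subsingleton_of_nested [Nonempty ι]
    (nested : ∀ i k, N i ⊆ N k ∨ N k ⊆ N i)
    (inter : Pairwise fun i k => (N i ∩ N k).Subsingleton) :
    ∃ r, ∀ i ≠ r, (N i).Subsingleton := by
  by_cases hall : ∀ i, (N i).Subsingleton
  · exact ⟨Classical.arbitrary ι, fun i _ => hall i⟩
  · obtain ⟨r, hr⟩ := not_forall.1 hall
    exact ⟨r, fun i hi =>
      (subsingleton_or_subsingleton_of_nested nested inter hi).resolve_right hr⟩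

theorem exists_forall_ne_subset_singleton_of_nested [Nonempty ι] [Nonempty α]
    (nested : ∀ i k, N i ⊆ N k ∨ N k ⊆ N i)
    (inter : Pairwise fun i k => (N i ∩ N k).Subsingleton) :
    ∃ r c, ∀ i ≠ r, N i ⊆ {c} := by
  obtain ⟨r, hr⟩ := exists_forall_ne_subsingleton_of_nested nested inter
  by_cases hempty : ∀ i ≠ r, N i = ∅
  · exact ⟨r, Classical.arbitrary α, fun i hi => by simp only [hempty i hi, Set.empty_subset]⟩
  · push Not at hempty
    obtain ⟨k, hk, c, hc⟩ := hempty
    refine ⟨r, c, fun i hi x hx => ?_⟩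
    obtain hsub | hsub := nested i k
    · exact hr k hk (hsub hx) hc
    · exact hr i hi hx (hsub hc)

end Nested

section Forms

variable {R : Type u} {C : Type v} {A : Type w} {g : R → C → A}

/-- The pattern `m1` in a form with arbitrary types of rows and columns; for `R = C = Fin p` this
unfolds to `ContainsM1`. -/
def HasM1 (g : R → C → A) : Prop :=
  ∃ i k j l, i ≠ k ∧ j ≠ l ∧ g i j = g k l ∧ g i l ≠ g i j ∧ g k j ≠ g i j

/-- The pattern `m2` in a form with arbitrary types of rows and columns; for `R = C = Fin p` this
unfolds to `ContainsM2`. -/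
def HasM2 (g : R → C → A) : Prop :=
  ∃ i k j l, i ≠ k ∧ j ≠ l ∧ g i j = g i l ∧ g i j = g k j ∧ g i j = g k l

/-- The set of candidates that occur in a form. -/
def candidates (g : R → C → A) : Set A :=
  {a | ∃ i j, g i j = a}

theorem finite_candidates [Finite R] [Finite C] (g : R → C → A) : (candidates g).Finite :=
  (Set.finite_range (uncurry g)).subset fun _ ⟨i, j, hij⟩ => ⟨(i, j), hij⟩

theorem nested_preimage_singleton_of_not_hasM1 (h1 : ¬HasM1 g) (a : A) (i k : R) :
    g i ⁻¹' {a} ⊆ g k ⁻¹' {a} ∨ g k ⁻¹' {a} ⊆ g i ⁻¹' {a} := by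
  by_contra! hnot
  obtain ⟨⟨j, hij, hkj⟩, l, hkl, hil⟩ := hnot.imp Set.not_subset.1 Set.not_subset.1
  simp only [Set.mem_preimage, Set.mem_singleton_iff] at hij hkj hkl hil
  refine h1 ⟨i, k, j, l, ?_, ?_, hij.trans hkl.symm, hij ▸ hil, hij ▸ hkj⟩
  · rintro rfl
    exact hkj hij
  · rintro rfl
    exact hil hij

theorem pairwise_subsingleton_inter_preimage_singleton_of_not_hasM2 (h2 : ¬HasM2 g) (a : A) :
    Pairwise fun i k => (g i ⁻¹' {a} ∩ g k ⁻¹' {a}).Subsingleton := by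
  rintro i k hik j ⟨hij, hkj⟩ l ⟨hil, hkl⟩
  by_contra hjl
  exact h2 ⟨i, k, j, l, hik, hjl, hij.trans hil.symm, hij.trans hkj.symm, hij.trans hkl.symm⟩

theorem exists_row_col_of_not_hasM1_of_not_hasM2 [Nonempty R] [Nonempty C]
    (h1 : ¬HasM1 g) (h2 : ¬HasM2 g) (a : A) :
    ∃ r c, ∀ i j, g i j = a → i = r ∨ j = c := by
  obtain ⟨r, c, hrc⟩ := exists_forall_ne_subset_singleton_of_nested
    (nested_preimage_singleton_of_not_hasM1 h1 a)
    (pairwise_subsingleton_inter_preimage_singleton_of_not_hasM2 h2 a)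
  exact ⟨r, c, fun i j hij => or_iff_not_imp_left.2 fun hi => hrc i hi hij⟩

theorem surjOn_candidates_or_surjOn_candidates {r : A → R} {c : A → C}
    (hrc : ∀ i j, i = r (g i j) ∨ j = c (g i j)) :
    Set.SurjOn r (candidates g) Set.univ ∨ Set.SurjOn c (candidates g) Set.univ := by
  by_contra! hnot
  obtain ⟨⟨i, -, hi⟩, j, -, hj⟩ := hnot.imp Set.not_subset.1 Set.not_subset.1
  obtain hrow | hcol := hrc i j
  · exact hi ⟨g i j, ⟨i, j, rfl⟩, hrow.symm⟩
  · exact hj ⟨g i j, ⟨i, j, rfl⟩, hcol.symm⟩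

theorem lift_mk_le_of_surjOn_univ {α : Type u} {β : Type v} {f : α → β} {s : Set α}
    (hf : Set.SurjOn f s Set.univ) : lift.{u} #β ≤ lift.{v} #s := by
  simpa only [Set.univ_subset_iff.1 hf, mk_univ] using mk_image_le_lift (f := f) (s := s)

theorem containsM1_or_M2_of_too_few_candidates_general (g : R → C → A)
    (hrows : lift.{u} #(candidates g) < lift.{w} #R)
    (hcols : lift.{v} #(candidates g) < lift.{w} #C) :
    HasM1 g ∨ HasM2 g := by
  by_contra! hnot
  have : Nonempty R := mk_ne_zero_iff.1 (lift_eq_zero.not.1 hrows.ne_bot)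
  have : Nonempty C := mk_ne_zero_iff.1 (lift_eq_zero.not.1 hcols.ne_bot)
  choose r c hrc using exists_row_col_of_not_hasM1_of_not_hasM2 hnot.1 hnot.2
  obtain hr | hc := surjOn_candidates_or_surjOn_candidates fun i j => hrc (g i j) i j rfl
  · exact hrows.not_ge (lift_mk_le_of_surjOn_univ hr)
  · exact hcols.not_ge (lift_mk_le_of_surjOn_univ hc)

end Forms

/-- If a `p × p` voting form contains at most `p - 1` distinct candidates as
entries, then it contains `m1` or `m2` as a submatrix. -/
theorem containsM1_or_M2_of_too_few_candidates
    {p : ℕ} {A : Type*} (g : Fin p → Fin p → A)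
    (h : {a : A | ∃ i j, g i j = a}.ncard < p) :
    ContainsM1 g ∨ ContainsM2 g := by
  have hlt : lift.{0} #(candidates g) < lift #(Fin p) := by
    rwa [lift_uzero, mk_fin, lift_natCast, ← Set.cast_ncard (finite_candidates g), Nat.cast_lt]
  exact containsM1_or_M2_of_too_few_candidates_general g hlt hlt
end

section
/- Let A be a finite set of exactly p candidates and let g : Fin p → Fin p → A be a p × p voting form in which every candidate of A appears as an entry. Then g is a plurality DAV form (i.e., there exist bijections σ, τ : Fin p → A with g(i,j) ∈ {σ(i), τ(j)} for all i, j) if and only if g contains none of m1, m2, m3 as a submatrix. -/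
/-!
In a labeling by injective `σ` and `τ`, a candidate that occurs twice in a row must be the label of
that row, and likewise for columns; this rules out `m2` and `m3`. In `m1`, of the two equal diagonal
entries one is its row label and the other its column label, so the entry where that row and that
column cross would have to equal them.

Conversely, without the patterns, each line has at most one repeated candidate, and no candidate is
repeated in two parallel lines, so that the assignment of repeated candidates to lines extends to
bijections `σ` and `τ`. Every row `i` then contains `σ i`: if no candidate is repeated in it, it
contains all candidates. An entry `a` different from its two labels would be the only `a` in its row
and in its column, and would form `m1` with an `a` in the row labeled `a`.
-/

theorem exists_equiv_of_biUnique {α β : Type*} [Fintype α] [Fintype β]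
    (hcard : Fintype.card α = Fintype.card β) {r : α → β → Prop} (hr : Relator.BiUnique r) :
    ∃ e : α ≃ β, ∀ a b, r a b → e a = b := by
  classical
  have hf (a : α) : ∃ c, ∀ b, r a b → c = b := by
    by_cases h : ∃ c, r a c
    · obtain ⟨c, hc⟩ := h
      exact ⟨c, fun b hb => hr.2 hc hb⟩
    · exact ⟨Fintype.equivOfCardEq hcard a, fun b hb => (h ⟨b, hb⟩).elim⟩
  choose f hf using hf
  have hinj : Set.InjOn f {a | ∃ b, r a b} := by
    rintro a ⟨b, hab⟩ a' ⟨b', hab'⟩ h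
    rw [hf a b hab, hf a' b' hab'] at h
    exact hr.1 hab (h ▸ hab')
  obtain ⟨e, he⟩ := Set.MapsTo.exists_equiv_extend_of_card_eq (t := Finset.univ)
    (by rwa [Finset.card_univ]) (fun a _ => Finset.mem_coe.2 (Finset.mem_univ (f a))) hinj
  exact ⟨e.trans (Equiv.subtypeUnivEquiv Finset.mem_univ),
    fun a b hab => (he a ⟨b, hab⟩).trans (hf a b hab)⟩

section Patterns

variable {p : ℕ} {A : Type*} {g : Fin p → Fin p → A}

theorem containsM1_flip : ContainsM1 (flip g) ↔ ContainsM1 g :=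
  ⟨fun ⟨i, k, j, l, hik, hjl, h, hil, hkj⟩ => ⟨j, l, i, k, hjl, hik, h, hkj, hil⟩,
    fun ⟨i, k, j, l, hik, hjl, h, hil, hkj⟩ => ⟨j, l, i, k, hjl, hik, h, hkj, hil⟩⟩

theorem containsM2_flip : ContainsM2 (flip g) ↔ ContainsM2 g :=
  ⟨fun ⟨i, k, j, l, hik, hjl, hil, hkj, hkl⟩ => ⟨j, l, i, k, hjl, hik, hkj, hil, hkl⟩,
    fun ⟨i, k, j, l, hik, hjl, hil, hkj, hkl⟩ => ⟨j, l, i, k, hjl, hik, hkj, hil, hkl⟩⟩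

theorem containsM3_flip : ContainsM3 (flip g) ↔ ContainsM3 g :=
  or_comm

end Patterns

section Necessity

variable {p : ℕ} {A : Type*} {g : Fin p → Fin p → A} {σ τ : Fin p → A}

theorem TwiceInRow.label_eq {i : Fin p} {a : A} (ha : TwiceInRow g i a)
    (hτ : Function.Injective τ) (hg : ∀ i j, g i j = σ i ∨ g i j = τ j) : σ i = a := by
  obtain ⟨j, l, hjl, rfl, hl⟩ := ha
  rcases hg i j with hj | hj
  · exact hj.symm
  rcases hg i l with hl' | hl'
  · exact hl'.symm.trans hl
  · exact (hjl (hτ (hj.symm.trans (hl.symm.trans hl')))).elim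

theorem TwiceInCol.label_eq {j : Fin p} {a : A} (ha : TwiceInCol g j a)
    (hσ : Function.Injective σ) (hg : ∀ i j, g i j = σ i ∨ g i j = τ j) : τ j = a :=
  TwiceInRow.label_eq (g := flip g) ha hσ fun j i => (hg i j).symm

theorem not_containsM1_of_labels (hσ : Function.Injective σ) (hτ : Function.Injective τ)
    (hg : ∀ i j, g i j = σ i ∨ g i j = τ j) : ¬ ContainsM1 g := by
  rintro ⟨i, k, j, l, hik, hjl, h, hil, hkj⟩
  rcases hg i j with hij | hij <;> rcases hg k l with hkl | hkl
  · exact hik (hσ (hij.symm.trans (h.trans hkl)))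
  · rcases hg i l with h' | h'
    · exact hil (h'.trans hij.symm)
    · exact hil (h'.trans (h.trans hkl).symm)
  · rcases hg k j with h' | h'
    · exact hkj (h'.trans (h.trans hkl).symm)
    · exact hkj (h'.trans hij.symm)
  · exact hjl (hτ (hij.symm.trans (h.trans hkl)))

theorem not_containsM2_of_labels (hσ : Function.Injective σ) (hτ : Function.Injective τ)
    (hg : ∀ i j, g i j = σ i ∨ g i j = τ j) : ¬ ContainsM2 g := by
  rintro ⟨i, k, j, l, hik, hjl, hil, hkj, hkl⟩
  have hi : TwiceInRow g i (g i j) := ⟨j, l, hjl, rfl, hil.symm⟩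
  have hk : TwiceInRow g k (g i j) := ⟨j, l, hjl, hkj.symm, hkl.symm⟩
  exact hik (hσ ((hi.label_eq hτ hg).trans (hk.label_eq hτ hg).symm))

theorem not_containsM3_of_labels (hσ : Function.Injective σ) (hτ : Function.Injective τ)
    (hg : ∀ i j, g i j = σ i ∨ g i j = τ j) : ¬ ContainsM3 g := by
  rintro (⟨i, a, b, hab, ha, hb⟩ | ⟨j, a, b, hab, ha, hb⟩)
  · exact hab ((ha.label_eq hτ hg).symm.trans (hb.label_eq hτ hg))
  · exact hab ((ha.label_eq hσ hg).symm.trans (hb.label_eq hσ hg))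

end Necessity

section Sufficiency

variable {p : ℕ} {A : Type*} {g : Fin p → Fin p → A}

theorem row_fibers_nested (h1 : ¬ ContainsM1 g) {i k : Fin p} (hik : i ≠ k) (a : A) :
    g i ⁻¹' {a} ⊆ g k ⁻¹' {a} ∨ g k ⁻¹' {a} ⊆ g i ⁻¹' {a} := by
  by_contra! h
  obtain ⟨⟨j, hij, hkj⟩, ⟨l, hkl, hil⟩⟩ := h.imp Set.not_subset.1 Set.not_subset.1
  simp only [Set.mem_preimage, Set.mem_singleton_iff] at hij hkj hkl hil
  have hjl : j ≠ l := fun h => hkj (h ▸ hkl)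
  exact h1 ⟨i, k, j, l, hik, hjl, hij.trans hkl.symm, hij ▸ hil, hij ▸ hkj⟩

theorem TwiceInRow.not_fiber_subset (h2 : ¬ ContainsM2 g) {i k : Fin p} (hik : i ≠ k) {a : A}
    (hi : TwiceInRow g i a) : ¬ g i ⁻¹' {a} ⊆ g k ⁻¹' {a} := by
  intro hsub
  obtain ⟨j, l, hjl, hj, hl⟩ := hi
  exact h2 ⟨i, k, j, l, hik, hjl, hj.trans hl.symm, hj.trans (hsub hj).symm,
    hj.trans (hsub hl).symm⟩

theorem twiceInRow_biUnique (h1 : ¬ ContainsM1 g) (h2 : ¬ ContainsM2 g) (h3 : ¬ ContainsM3 g) :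
    Relator.BiUnique (TwiceInRow g) := by
  constructor
  · intro i k a hi hk
    by_contra hik
    exact (row_fibers_nested h1 hik a).elim (hi.not_fiber_subset h2 hik)
      (hk.not_fiber_subset h2 (Ne.symm hik))
  · intro i a b ha hb
    by_contra hab
    exact h3 (.inl ⟨i, a, b, hab, ha, hb⟩)

theorem exists_entry_eq_of_forall_twiceInRow [Fintype A] (hA : Fintype.card A = p) {i : Fin p}
    {a : A} (ha : ∀ b, TwiceInRow g i b → a = b) : ∃ j, g i j = a := by
  by_cases hinj : Function.Injective (g i)
  · have hbij : Function.Bijective (g i) :=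
      (Fintype.bijective_iff_injective_and_card _).2 ⟨hinj, by rw [Fintype.card_fin, hA]⟩
    exact hbij.surjective a
  · obtain ⟨j, l, hjl, hne⟩ := Function.not_injective_iff.1 hinj
    exact ⟨j, (ha (g i j) ⟨j, l, hne, rfl, hjl.symm⟩).symm⟩

theorem exists_row_labels [Fintype A] (hA : Fintype.card A = p) (h1 : ¬ ContainsM1 g)
    (h2 : ¬ ContainsM2 g) (h3 : ¬ ContainsM3 g) :
    ∃ σ : Fin p ≃ A, ∀ i a, TwiceInRow g i a → σ i = a :=
  exists_equiv_of_biUnique (by rw [Fintype.card_fin, hA]) (twiceInRow_biUnique h1 h2 h3)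

theorem exists_col_labels [Fintype A] (hA : Fintype.card A = p) (h1 : ¬ ContainsM1 g)
    (h2 : ¬ ContainsM2 g) (h3 : ¬ ContainsM3 g) :
    ∃ τ : Fin p ≃ A, ∀ j a, TwiceInCol g j a → τ j = a :=
  exists_row_labels (g := flip g) hA (mt containsM1_flip.1 h1) (mt containsM2_flip.1 h2)
    (mt containsM3_flip.1 h3)

theorem entry_eq_row_label_or_col_label [Fintype A] (hA : Fintype.card A = p)
    (h1 : ¬ ContainsM1 g) {σ τ : Fin p → A} (hσ : Function.Surjective σ)
    (hrow : ∀ i a, TwiceInRow g i a → σ i = a) (hcol : ∀ j a, TwiceInCol g j a → τ j = a)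
    (i j : Fin p) : g i j = σ i ∨ g i j = τ j := by
  by_contra! ⟨hi, hj⟩
  have hrow_unique (l : Fin p) (hjl : j ≠ l) : g i l ≠ g i j := fun h =>
    hi (hrow i (g i j) ⟨j, l, hjl, rfl, h⟩).symm
  have hcol_unique (k : Fin p) (hik : i ≠ k) : g k j ≠ g i j := fun h =>
    hj (hcol j (g i j) ⟨i, k, hik, rfl, h⟩).symm
  obtain ⟨k, hk⟩ := hσ (g i j)
  obtain ⟨l, hl⟩ := exists_entry_eq_of_forall_twiceInRow hA (hrow k)
  have hkl : g k l = g i j := hl.trans hk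
  have hik : i ≠ k := fun h => hi (h ▸ hk.symm)
  have hjl : j ≠ l := fun h => hcol_unique k hik (h ▸ hkl)
  exact h1 ⟨i, k, j, l, hik, hjl, hkl.symm, hrow_unique l hjl, hcol_unique k hik⟩

end Sufficiency

theorem isPluralityDAV_iff_no_forbidden_general {p : ℕ} {A : Type*} [Fintype A]
    (hA : Fintype.card A = p) (g : Fin p → Fin p → A) :
    IsPluralityDAV g ↔ (¬ ContainsM1 g ∧ ¬ ContainsM2 g ∧ ¬ ContainsM3 g) := by
  constructor
  · rintro ⟨σ, τ, hσ, hτ, hg⟩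
    exact ⟨not_containsM1_of_labels hσ.injective hτ.injective hg,
      not_containsM2_of_labels hσ.injective hτ.injective hg,
      not_containsM3_of_labels hσ.injective hτ.injective hg⟩
  · rintro ⟨h1, h2, h3⟩
    obtain ⟨σ, hrow⟩ := exists_row_labels hA h1 h2 h3
    obtain ⟨τ, hcol⟩ := exists_col_labels hA h1 h2 h3
    exact ⟨σ, τ, σ.bijective, τ.bijective,
      entry_eq_row_label_or_col_label hA h1 σ.surjective hrow hcol⟩

/-- Characterization: a `p × p` voting form in which all `p` candidates appear
is a plurality DAV form iff it contains none of `m1, m2, m3` as a submatrix. -/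
theorem isPluralityDAV_iff_no_forbidden
    {p : ℕ} {A : Type*} [Fintype A] (hA : Fintype.card A = p)
    (g : Fin p → Fin p → A) (hsurj : ∀ a : A, ∃ i j, g i j = a) :
    IsPluralityDAV g ↔ (¬ ContainsM1 g ∧ ¬ ContainsM2 g ∧ ¬ ContainsM3 g) :=
  isPluralityDAV_iff_no_forbidden_general hA g
end

section
/- Consider n voters with positive integer weights α_1, …, α_n, two candidates a and b, and any DAV form g (so g(z) ∈ AM(z) for every strategy profile z). Fix a voter i and two distinct values z, z' ∈ {0,…,α_i}. Then s_g(i,z,a) = s_g(i,z',a) holds if and only if the planes g_{i,z} and g_{i,z'} are identical, i.e., for every pair of strategy profiles w, w' with w_i = z, w'_i = z', and w_j = w'_j for all j ≠ i, one has g(w) = g(w'). -/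
/-- In distributed approval voting with two candidates `a` and `b`, voter `i`
with weight `w i` playing `z i` gives `z i` cards to `a` and `w i - z i` cards
to `b`. `twoAM w z a b` is the set of candidates (among `{a, b}`) receiving the
maximum total number of cards. -/
def twoAM {n : ℕ} {A : Type*} [DecidableEq A] (w z : Fin n → ℕ) (a b : A) : Set A :=
  {c | c ∈ ({a, b} : Set A) ∧
    ∀ d ∈ ({a, b} : Set A),
      (if d = a then ∑ i, z i else ∑ i, (w i - z i)) ≤
        (if c = a then ∑ i, z i else ∑ i, (w i - z i))}

/-!
Raising voter `i`'s strategy moves cards from `b` to `a`, so a profile electing `a` still elects `a`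
afterwards. Identify the planes `g_{i,z}` and `g_{i,z'}` by overwriting the `i`-th coordinate: their
sets of profiles electing `a` become comparable for inclusion, and comparable finite sets are equal
as soon as they have the same size.
-/

theorem ncard_eq_ncard_iff_of_subset_or_subset {β : Type*} {s t : Set β} (hs : s.Finite)
    (ht : t.Finite) (hst : s ⊆ t ∨ t ⊆ s) : s.ncard = t.ncard ↔ s = t := by
  refine ⟨fun hcard => ?_, congrArg Set.ncard⟩
  rcases hst with hst | hts
  · exact Set.eq_of_subset_of_ncard_le hst hcard.ge ht
  · exact (Set.eq_of_subset_of_ncard_le hts hcard.le hs).symm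

section Planes

variable {ι : Type*} {α : ι → Type*} [∀ j, Preorder (α j)]

/-- The plane of all strategy profiles bounded by the weights `w` in which voter `i` plays `z`. The
form `g` does not enter: the paper's plane `g_{i,z}` is the restriction of `g` to this set. -/
def strategyPlane (w : ∀ j, α j) (i : ι) (z : α i) : Set (∀ j, α j) :=
  {v | v ≤ w ∧ v i = z}

variable [DecidableEq ι] {w : ∀ j, α j} {i : ι} {z z' : α i}

theorem update_mem_strategyPlane {v : ∀ j, α j} (hv : v ≤ w) (hz : z ≤ w i) :
    Function.update v i z ∈ strategyPlane w i z :=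
  ⟨update_le_iff.2 ⟨hz, fun j _ => hv j⟩, Function.update_self i z v⟩

theorem update_update_of_mem_strategyPlane {v : ∀ j, α j} (hv : v ∈ strategyPlane w i z)
    (z' : α i) : Function.update (Function.update v i z') i z = v := by
  rw [Function.update_idem, ← hv.2, Function.update_eq_self]

theorem bijOn_update_strategyPlane (hz : z ≤ w i) (hz' : z' ≤ w i) :
    Set.BijOn (fun v => Function.update v i z') (strategyPlane w i z) (strategyPlane w i z') :=
  Set.InvOn.bijOn (f' := fun v => Function.update v i z)
    ⟨fun _ hv => update_update_of_mem_strategyPlane hv z',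
      fun _ hv => update_update_of_mem_strategyPlane hv z⟩
    (fun _ hv => update_mem_strategyPlane hv.1 hz')
    (fun _ hv => update_mem_strategyPlane hv.1 hz)

theorem ncard_strategyPlane_sep_update (hz : z ≤ w i) (hz' : z' ≤ w i) (p : (∀ j, α j) → Prop) :
    {v ∈ strategyPlane w i z | p (Function.update v i z')}.ncard =
      {v ∈ strategyPlane w i z' | p v}.ncard := by
  have hbij := bijOn_update_strategyPlane hz hz'
  rw [← (hbij.injOn.mono (Set.sep_subset _ _)).ncard_image, ← hbij.image_eq]
  exact congrArg Set.ncard (Set.image_inter_preimage _ _ {v | p v})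

theorem forall_strategyPlane_update_iff (hz' : z' ≤ w i) (r : (∀ j, α j) → (∀ j, α j) → Prop) :
    (∀ v ∈ strategyPlane w i z, r v (Function.update v i z')) ↔
      ∀ v v', v ≤ w → v' ≤ w → v i = z → v' i = z' → (∀ j, j ≠ i → v j = v' j) → r v v' := by
  constructor
  · intro h v v' hv _ hvi hvi' hagree
    have hv' : Function.update v i z' = v' := Function.update_eq_iff.2 ⟨hvi'.symm, hagree⟩
    exact hv' ▸ h v ⟨hv, hvi⟩
  · intro h v hv
    have hmem := update_mem_strategyPlane hv.1 hz'
    exact h v _ hv.1 hmem.1 hv.2 hmem.2 fun j hj => (Function.update_of_ne hj z' v).symm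

theorem ncard_strategyPlane_sep_eq_iff (hw : (Set.Iic w).Finite) (hz : z ≤ w i) (hz' : z' ≤ w i)
    (hzz' : z ≤ z' ∨ z' ≤ z) {p : (∀ j, α j) → Prop} (hp : MonotoneOn p (Set.Iic w)) :
    {v ∈ strategyPlane w i z | p v}.ncard = {v ∈ strategyPlane w i z' | p v}.ncard ↔
      ∀ v ∈ strategyPlane w i z, (p v ↔ p (Function.update v i z')) := by
  have hfin (q : (∀ j, α j) → Prop) : {v ∈ strategyPlane w i z | q v}.Finite :=
    hw.subset fun _ hv => hv.1.1
  have hcomparable :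
      {v ∈ strategyPlane w i z | p v} ⊆ {v ∈ strategyPlane w i z | p (Function.update v i z')} ∨
      {v ∈ strategyPlane w i z | p (Function.update v i z')} ⊆ {v ∈ strategyPlane w i z | p v} := by
    refine hzz'.imp (fun hle v hv => ⟨hv.1, ?_⟩) (fun hle v hv => ⟨hv.1, ?_⟩)
    · have hv_le : v ≤ Function.update v i z' := le_update_self_iff.2 (hv.1.2.trans_le hle)
      exact hp hv.1.1 (update_mem_strategyPlane hv.1.1 hz').1 hv_le hv.2
    · have hle_v : Function.update v i z' ≤ v := update_le_self_iff.2 (hle.trans_eq hv.1.2.symm)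
      exact hp (update_mem_strategyPlane hv.1.1 hz').1 hv.1.1 hle_v hv.2
  rw [← ncard_strategyPlane_sep_update hz hz' p,
    ncard_eq_ncard_iff_of_subset_or_subset (hfin _) (hfin _) hcomparable]
  exact Set.sep_ext_iff

end Planes

section TwoCandidates

variable {n : ℕ} {A : Type*} [DecidableEq A] {w v u : Fin n → ℕ} {a b : A}

theorem left_mem_twoAM_iff : a ∈ twoAM w v a b ↔ b = a ∨ ∑ j, (w j - v j) ≤ ∑ j, v j := by
  by_cases hba : b = a <;> simp [twoAM, hba]

theorem right_mem_twoAM_iff : b ∈ twoAM w v a b ↔ b = a ∨ ∑ j, v j ≤ ∑ j, (w j - v j) := by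
  by_cases hba : b = a <;> simp [twoAM, hba]

theorem right_notMem_twoAM_of_lt (hba : b ≠ a) (hvu : v < u) (ha : a ∈ twoAM w v a b) :
    b ∉ twoAM w u a b := by
  rw [right_mem_twoAM_iff, or_iff_right hba, not_le]
  calc
    ∑ j, (w j - u j) ≤ ∑ j, (w j - v j) :=
      Finset.sum_le_sum fun j _ => Nat.sub_le_sub_left (hvu.le j) (w j)
    _ ≤ ∑ j, v j := (left_mem_twoAM_iff.1 ha).resolve_left hba
    _ < ∑ j, u j := Fintype.sum_strictMono hvu

/-- A DAV form for the candidates `a` and `b` under the weights `w`: a rule electing, at each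
strategy profile, a candidate with the most cards. Its values at tuples exceeding `w` somewhere,
which are not strategy profiles, are unconstrained. -/
def IsTwoCandidateForm (w : Fin n → ℕ) (a b : A) (g : (Fin n → ℕ) → A) : Prop :=
  ∀ v ≤ w, g v ∈ twoAM w v a b

namespace IsTwoCandidateForm

variable {g : (Fin n → ℕ) → A}

theorem eq_left_or_eq_right (hg : IsTwoCandidateForm w a b g) (hv : v ≤ w) :
    g v = a ∨ g v = b :=
  (hg v hv).1

theorem monotoneOn_eq_left (hg : IsTwoCandidateForm w a b g) :
    MonotoneOn (fun v => g v = a) (Set.Iic w) := by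
  intro v hv u hu hvu hva
  rcases hvu.eq_or_lt with rfl | hlt
  · exact hva
  by_contra hua
  have hub : g u = b := (hg.eq_left_or_eq_right hu).resolve_left hua
  have ha : a ∈ twoAM w v a b := hva ▸ hg v hv
  have hb : b ∈ twoAM w u a b := hub ▸ hg u hu
  exact right_notMem_twoAM_of_lt (hub ▸ hua) hlt ha hb

theorem eq_iff_eq_left_iff (hg : IsTwoCandidateForm w a b g) (hv : v ≤ w) (hu : u ≤ w) :
    g v = g u ↔ (g v = a ↔ g u = a) := by
  have hgv := hg.eq_left_or_eq_right hv
  have hgu := hg.eq_left_or_eq_right hu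
  grind

end IsTwoCandidateForm

end TwoCandidates

/-- Two planes `g_{i,z}` and `g_{i,z'}` of a two-candidate DAV form are
identical iff the counts of occurrences of `a` in them coincide. -/
theorem twoCandidate_form_planes_eq_iff_signatures_eq
    (n : ℕ) (w : Fin n → ℕ) (hw : ∀ i, 1 ≤ w i)
    {A : Type*} [DecidableEq A] (a b : A) (hab : a ≠ b)
    (g : (Fin n → ℕ) → A)
    (hg : ∀ v : Fin n → ℕ, (∀ j, v j ≤ w j) → g v ∈ twoAM w v a b)
    (i : Fin n) (z z' : ℕ) (hz : z ≤ w i) (hz' : z' ≤ w i) (hne : z ≠ z') :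
    ({v : Fin n → ℕ | (∀ j, v j ≤ w j) ∧ v i = z ∧ g v = a}.ncard =
        {v : Fin n → ℕ | (∀ j, v j ≤ w j) ∧ v i = z' ∧ g v = a}.ncard) ↔
    (∀ v v' : Fin n → ℕ, (∀ j, v j ≤ w j) → (∀ j, v' j ≤ w j) →
      v i = z → v' i = z' → (∀ j, j ≠ i → v j = v' j) →
      g v = g v') := by
  have hform : IsTwoCandidateForm w a b g := hg
  have hplane (y : ℕ) : {v : Fin n → ℕ | (∀ j, v j ≤ w j) ∧ v i = y ∧ g v = a} =
      {v ∈ strategyPlane w i y | g v = a} := Set.ext fun _ => and_assoc.symm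
  have hupdate : (∀ v ∈ strategyPlane w i z, (g v = a ↔ g (Function.update v i z') = a)) ↔
      ∀ v ∈ strategyPlane w i z, g v = g (Function.update v i z') :=
    forall₂_congr fun v hv =>
      (hform.eq_iff_eq_left_iff hv.1 (update_mem_strategyPlane hv.1 hz').1).symm
  rw [hplane, hplane, ncard_strategyPlane_sep_eq_iff (Set.finite_Iic w) hz hz' (le_total z z')
    hform.monotoneOn_eq_left, hupdate]
  exact forall_strategyPlane_update_iff hz' fun v v' => g v = g v'
end
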